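/- If K is a classical knot diagram (a virtual knot diagram with no virtual crossings), then every classical crossing c of K has weight W(c) = 0, and consequently P_K(t) = 0. -/

import Mathlib

/-!
# Virtual knots and links via signed Gauss codes

A virtual knot or link diagram, up to the virtual Reidemeister moves and the
detour move, is faithfully encoded by its signed oriented Gauss code: the
cyclic sequence, along each component, of passages through the classical
crossings, each passage recording the crossing's name, whether the strand
passes over or under, and the crossing sign.  Virtual crossings and the
detour move are invisible in this encoding, so oriented virtual isotopy is
generated by the oriented classical Reidemeister moves together with
re-encoding moves (rotation of the base point, permutation of the components,
renaming of the crossings).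
-/

open LaurentPolynomial

/-- A passage of a strand through a classical crossing of a virtual diagram. -/
structure Passage where
  id : ℕ
  isOver : Bool
  sign : ℤ
  deriving DecidableEq, Repr

instance : Inhabited Passage := ⟨⟨0, false, 0⟩⟩

/-- The affine-label increment when the strand passes through a crossing:
crossing to the left increases the label by one, crossing to the right
decreases it by one.  For a positive crossing the over-strand crosses to the
right and the under-strand to the left; for a negative crossing it is the
other way around.  Labels are unchanged at virtual crossings. -/
def Passage.inc (p : Passage) : ℤ := if p.isOver then -p.sign else p.sign

/-- The Gauss code of one oriented circle component. -/
abbrev KCode := List Passage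

/-- The list of classical crossing names appearing in a code. -/
def crossIds (a : KCode) : List ℕ := (a.map Passage.id).dedup

/-- The number of classical crossings. -/
def numCross (a : KCode) : ℕ := (crossIds a).length

/-- A valid knot code: every crossing has sign `±1` and occurs exactly once as
an over-passage and exactly once as an under-passage, with consistent sign. -/
def ValidK (a : KCode) : Prop :=
  ∀ p ∈ a, (p.sign = 1 ∨ p.sign = -1) ∧
    (a.filter (fun q => q.id == p.id && q.isOver)).length = 1 ∧
    (a.filter (fun q => q.id == p.id && !q.isOver)).length = 1 ∧
    (∀ q ∈ a, q.id = p.id → q.sign = p.sign)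

/-- The canonical affine label of the arc entering the `k`-th passage
(base label `0` on the arc entering the `0`-th passage). -/
def labelAt (a : KCode) (k : ℕ) : ℤ := ((a.take k).map Passage.inc).sum

/-- Position of the over-passage of crossing `i`. -/
def overPos (a : KCode) (i : ℕ) : ℕ := a.findIdx (fun p => p.id == i && p.isOver)

/-- Position of the under-passage of crossing `i`. -/
def underPos (a : KCode) (i : ℕ) : ℕ := a.findIdx (fun p => p.id == i && !p.isOver)

/-- The sign of crossing `i`. -/
def sgn (a : KCode) (i : ℕ) : ℤ :=
  ((a.find? (fun p => p.id == i)).map Passage.sign).getD 0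

/-- The weight `W_K(c)` of a crossing `c`: with incoming labels `a` (left) and
`b` (right) it is `W₊ = a - b - 1` if `sgn c = 1` and `W₋ = b - a + 1` if
`sgn c = -1`; equivalently it is
(label entering the over-passage) − (label entering the under-passage) − sign. -/
def wt (a : KCode) (i : ℕ) : ℤ :=
  labelAt a (overPos a i) - labelAt a (underPos a i) - sgn a i

/-- The affine index polynomial `P_K(t) = ∑_c sgn(c) (t^{W_K(c)} - 1)`. -/
noncomputable def affP (a : KCode) : LaurentPolynomial ℤ :=
  ((crossIds a).map (fun i => (C (sgn a i)) * (T (wt a i) - 1))).sum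

/-- The signed crossing count `wr_n(K) = ∑_{c : W_K(c) = n} sgn(c)`. -/
def wrn (a : KCode) (n : ℤ) : ℤ :=
  (((crossIds a).filter (fun i => wt a i == n)).map (sgn a)).sum

/-- A crossing is odd when it flanks an odd number of symbols of the Gauss
code, i.e. when the positions of its two passages differ by an even number. -/
def OddCross (a : KCode) (i : ℕ) : Bool := (overPos a i + underPos a i) % 2 == 0

/-- The odd writhe `J(K)`: the sum of the signs of the odd crossings. -/
def oddWrithe (a : KCode) : ℤ := (((crossIds a).filter (OddCross a)).map (sgn a)).sum

/-- The reverse `K̄` of `K`: the same diagram with reversed orientation. -/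
def reverseK (a : KCode) : KCode := a.reverse

/-- The (flat) mirror image `K*`: every classical crossing is switched, which
exchanges over- and under-passages and reverses all crossing signs. -/
def switchAll (a : KCode) : KCode := a.map (fun p => ⟨p.id, !p.isOver, -p.sign⟩)

/-- The vertical mirror image `K^!`: reflect the diagram in a plane
perpendicular to the plane of the diagram (which keeps the over/under data
and reverses all crossing signs) and reverse the orientation. -/
def vmirror (a : KCode) : KCode := (a.map (fun p => ⟨p.id, p.isOver, -p.sign⟩)).reverse

/-- Rename the crossings of a code by `f`. -/
def relabel (f : ℕ → ℕ) (a : KCode) : KCode := a.map (fun p => { p with id := f p.id })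

/-! ## Links -/

/-- A link code: a list of circle components. -/
abbrev LCode := List KCode

/-- Validity of a link code: the crossing data is globally consistent. -/
def ValidLink (L : LCode) : Prop := ValidK L.flatten

def crossIdsL (L : LCode) : List ℕ := crossIds L.flatten

def sgnL (L : LCode) (i : ℕ) : ℤ := sgn L.flatten i

/-- An affine (integer) labeling of the arcs of a link diagram:
`lab c k` is the label of the arc entering the `k`-th passage of the `c`-th
component; at each classical crossing with left incoming label `a` and right
incoming label `b`, the left outgoing label is `b+1` and the right outgoing
label is `a-1`, i.e. passing through a passage changes the label by its
increment.  Labels are unchanged at virtual crossings. -/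
def IsAffineLabeling (L : LCode) (lab : ℕ → ℕ → ℤ) : Prop :=
  ∀ c, c < L.length → ∀ k, k < (L.getD c []).length →
    lab c ((k + 1) % (L.getD c []).length) =
      lab c k + ((L.getD c []).getD k default).inc

/-- Locations `(component, position)` of the passages of crossing `i` that are
over-passages (`sel = true`) resp. under-passages (`sel = false`). -/
def locs (L : LCode) (i : ℕ) (sel : Bool) : List (ℕ × ℕ) :=
  (List.range L.length).flatMap (fun c =>
    (List.range (L.getD c []).length).filterMap (fun k =>
      if ((L.getD c []).getD k default).id = i ∧ ((L.getD c []).getD k default).isOver = sel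
      then some (c, k) else none))

/-- The weight of crossing `i` of a link diagram with affine labeling `lab`. -/
def wtL (L : LCode) (lab : ℕ → ℕ → ℤ) (i : ℕ) : ℤ :=
  lab ((locs L i true).headD (0, 0)).1 ((locs L i true).headD (0, 0)).2
    - lab ((locs L i false).headD (0, 0)).1 ((locs L i false).headD (0, 0)).2
    - sgnL L i

/-- The affine index polynomial of an affinely labeled link diagram. -/
noncomputable def affPL (L : LCode) (lab : ℕ → ℕ → ℤ) : LaurentPolynomial ℤ :=
  ((crossIdsL L).map (fun i => (C (sgnL L i)) * (T (wtL L lab i) - 1))).sum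

/-- The passages of component `c` whose partner passage lies on a different
component. -/
def crossPassages (L : LCode) (c : ℕ) : KCode :=
  (L.getD c []).filter (fun p =>
    ((L.getD c []).filter (fun q => q.id == p.id)).length == 1)

/-- The algebraic intersection number of component `c` with the union of the
other components: the signed count, in the plane, of the crossings of
component `c` with the other components (the strand crossing to the left
counts `+1`, to the right `−1`). -/
def algInt (L : LCode) (c : ℕ) : ℤ := ((crossPassages L c).map Passage.inc).sum

/-- A multi-component diagram is compatible when every component has algebraic
intersection number zero with the union of the other components. -/
def Compatible (L : LCode) : Prop := ∀ c < L.length, algInt L c = 0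

/-! ## Virtual isotopy

Link codes whose components carry an inert tracking label (a natural number);
the labels are preserved by isotopy and are used to follow components through
the births, deaths and saddles of a cobordism. -/

abbrev LLC := List (ℕ × KCode)

def plainL (L : LLC) : LCode := L.map Prod.snd

def idsOf (L : LLC) : List ℕ := crossIdsL (plainL L)

def pieceIds (L : LLC) : List ℕ := L.map Prod.fst

/-- `ReplC c c' segs segs'`: the circle `c'` is obtained from the circle `c`
by replacing, scanning from left to right, an initial batch of the listed
segments (`u` is replaced by `v` for each pair `(u, v)`), leaving `segs'`. -/
inductive ReplC : KCode → KCode → List (KCode × KCode) → List (KCode × KCode) → Prop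
  | nil (c : KCode) (segs : List (KCode × KCode)) : ReplC c c segs segs
  | cons {y y' : KCode} {segs segs' : List (KCode × KCode)} (x u v : KCode) :
      ReplC y y' segs segs' →
      ReplC (x ++ u ++ y) (x ++ v ++ y') ((u, v) :: segs) segs'

/-- `ReplL L L' segs`: the labeled link `L'` is obtained from `L` by
simultaneously performing all the listed segment replacements, in scanning
order. -/
inductive ReplL : LLC → LLC → List (KCode × KCode) → Prop
  | nil : ReplL [] [] []
  | cons {c c' : KCode} {L L' : LLC} {segs segs' : List (KCode × KCode)} (k : ℕ) :
      ReplC c c' segs segs' → ReplL L L' segs' → ReplL ((k, c) :: L) ((k, c') :: L') segs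

/-- `if b then [p, q] else [q, p]`. -/
def pairOf (b : Bool) (p q : Passage) : KCode := if b then [p, q] else [q, p]

/-- A generating move of oriented virtual isotopy on Gauss codes.  The
constructors `perm`, `rotate`, `rename` are inessential re-encodings; in
particular the virtual Reidemeister moves and the detour move leave the Gauss
code unchanged.  The constructors `r1`, `r2`, `r3` are the oriented classical
Reidemeister moves (`r1` and `r2` are stated as insertions; the inverse moves
are recovered by taking the symmetric closure). -/
inductive MoveStep : LLC → LLC → Prop
  /-- re-ordering the components -/
  | perm {L L' : LLC} (h : L.Perm L') : MoveStep L L'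
  /-- moving the base point of a component -/
  | rotate (k : ℕ) (x y : KCode) (L : LLC) :
      MoveStep ((k, x ++ y) :: L) ((k, y ++ x) :: L)
  /-- renaming the crossings injectively -/
  | rename {L : LLC} (f : ℕ → ℕ) (hf : Function.Injective f) :
      MoveStep L (L.map (fun c => (c.1, relabel f c.2)))
  /-- first Reidemeister move: insertion of a kink with a fresh crossing `i` -/
  | r1 {L L' : LLC} (i : ℕ) (o : Bool) (s : ℤ) (hs : s = 1 ∨ s = -1) (hi : i ∉ idsOf L)
      (h : ReplL L L' [([], [⟨i, o, s⟩, ⟨i, !o, s⟩])]) : MoveStep L L'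
  /-- second Reidemeister move: one strand slides across another, creating two
  fresh crossings `i, j` with opposite signs; `o` records whether the first
  strand passes over, `ord` the relative orientation of the strands. -/
  | r2 {L L' : LLC} (i j : ℕ) (o ord : Bool) (s : ℤ) (hs : s = 1 ∨ s = -1)
      (hij : i ≠ j) (hi : i ∉ idsOf L) (hj : j ∉ idsOf L)
      (h : ReplL L L'
        [([], [⟨i, o, s⟩, ⟨j, o, -s⟩]),
         ([], if ord then [⟨j, !o, -s⟩, ⟨i, !o, s⟩] else [⟨i, !o, s⟩, ⟨j, !o, -s⟩])]) :
      MoveStep L L'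
  /-- third Reidemeister move: a strand slides across a crossing.  Crossing
  `i` joins the top and the middle strand, `j` the top and the bottom strand,
  `k` the middle and the bottom strand; on each of the three strands the
  corresponding pair of adjacent passages is transposed.  The product of the
  three signs is `+1`, and the orders of the pairs along the strands are
  correlated with the signs as dictated by the orientations of the three
  strands (`t` records the order along the top strand). -/
  | r3 {L L' : LLC} (i j k : ℕ) (si sj sk : ℤ)
      (hsi : si = 1 ∨ si = -1) (hsj : sj = 1 ∨ sj = -1) (hsk : sk = 1 ∨ sk = -1)
      (hprod : si * sj * sk = 1)
      (hij : i ≠ j) (hik : i ≠ k) (hjk : j ≠ k)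
      (t : Bool) (segs : List (KCode × KCode))
      (hsegs : segs.Perm
        [(pairOf t ⟨i, true, si⟩ ⟨j, true, sj⟩,
          pairOf (!t) ⟨i, true, si⟩ ⟨j, true, sj⟩),
         (pairOf (t == (sj * sk == 1)) ⟨i, false, si⟩ ⟨k, true, sk⟩,
          pairOf (!(t == (sj * sk == 1))) ⟨i, false, si⟩ ⟨k, true, sk⟩),
         (pairOf (t == (si * sk == 1)) ⟨j, false, sj⟩ ⟨k, false, sk⟩,
          pairOf (!(t == (si * sk == 1))) ⟨j, false, sj⟩ ⟨k, false, sk⟩)])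
      (h : ReplL L L' segs) : MoveStep L L'

/-- Oriented virtual isotopy: the equivalence relation generated by the
classical Reidemeister moves, the virtual Reidemeister moves and the detour
move (the latter two being invisible on Gauss codes). -/
def Isotopic : LLC → LLC → Prop := Relation.EqvGen MoveStep

/-! ## Cobordism

A cobordism is a sequence of isotopies, births and deaths of unknotted
circles, and oriented saddle moves.  The schema of a cobordism is the abstract
surface it generates; we track its connected pieces through the component
labels, the genus of each piece, and the total genus of the pieces that have
been closed off, so that the genus of the schema is well defined. -/

/-- A state of a cobordism in progress: the current labeled link diagram (the
label of a circle names the surface piece it bounds), the genus of each piece,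
and the accumulated genus of closed-off pieces. -/
structure CobState where
  link : LLC
  genus : ℕ → ℕ
  closed : ℕ

/-- One step of a virtual cobordism. -/
inductive CobStep : CobState → CobState → Prop
  /-- a virtual isotopy move -/
  | isot {L L' : LLC} (g : ℕ → ℕ) (c : ℕ) (h : MoveStep L L') :
      CobStep ⟨L, g, c⟩ ⟨L', g, c⟩
  /-- birth of an unknotted circle, starting a fresh piece of genus `0` -/
  | birth (k : ℕ) (L : LLC) (g : ℕ → ℕ) (c : ℕ) (hk : k ∉ pieceIds L) :
      CobStep ⟨L, g, c⟩ ⟨(k, []) :: L, Function.update g k 0, c⟩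
  /-- death of an unknotted circle whose piece still has other boundary -/
  | death_keep (k : ℕ) (L : LLC) (g : ℕ → ℕ) (c : ℕ) (hk : k ∈ pieceIds L) :
      CobStep ⟨(k, []) :: L, g, c⟩ ⟨L, g, c⟩
  /-- death of an unknotted circle closing off its piece -/
  | death_close (k : ℕ) (L : LLC) (g : ℕ → ℕ) (c : ℕ) (hk : k ∉ pieceIds L) :
      CobStep ⟨(k, []) :: L, g, c⟩ ⟨L, g, c + g k⟩
  /-- oriented saddle splitting one circle into two (genus unchanged) -/
  | saddle_split (k : ℕ) (x y : KCode) (L : LLC) (g : ℕ → ℕ) (c : ℕ) :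
      CobStep ⟨(k, x ++ y) :: L, g, c⟩ ⟨(k, x) :: (k, y) :: L, g, c⟩
  /-- oriented saddle merging two boundary circles of the same piece
  (the genus of the piece increases by one) -/
  | saddle_merge_same (k : ℕ) (x y : KCode) (L : LLC) (g : ℕ → ℕ) (c : ℕ) :
      CobStep ⟨(k, x) :: (k, y) :: L, g, c⟩
        ⟨(k, x ++ y) :: L, Function.update g k (g k + 1), c⟩
  /-- oriented saddle merging boundary circles of two different pieces
  (the pieces merge and their genera add) -/
  | saddle_merge_diff (j k : ℕ) (x y : KCode) (L : LLC) (g : ℕ → ℕ) (c : ℕ)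
      (hjk : j ≠ k) :
      CobStep ⟨(j, x) :: (k, y) :: L, g, c⟩
        ⟨(j, x ++ y) :: (L.map fun p => if p.1 = k then (j, p.2) else p),
          Function.update (Function.update g j (g j + g k)) k 0, c⟩

/-- A virtual cobordism: a finite sequence of cobordism steps. -/
def Cob : CobState → CobState → Prop := Relation.ReflTransGen CobStep

/-- `L` and `L'` cobound a virtual cobordism (of some genus). -/
def Cobordant (L L' : LLC) : Prop :=
  ∃ g' c', Cob ⟨L, fun _ => 0, 0⟩ ⟨L', g', c'⟩

/-- The knot `a` bounds a virtual surface schema of genus `G`: there is a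
virtual cobordism from `a` to the empty link, and `G` is the total genus of
the pieces of its schema. -/
def BoundsGenus (a : KCode) (G : ℕ) : Prop :=
  ∃ g' : ℕ → ℕ, Cob ⟨[(0, a)], fun _ => 0, 0⟩ ⟨[], g', G⟩

/-! ## Concordance

A genus-zero cobordism (concordance) is one in which every critical point is
paired: each birth is paired with a canceling saddle and each death with a
canceling saddle.  An elementary concordance is a birth followed (after
isotopy) by a saddle amalgamating the born circle, or a saddle splitting off a
circle that (after isotopy) dies. -/

/-- One step of a concordance. -/
inductive ConcStep : LLC → LLC → Prop
  /-- a virtual isotopy -/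
  | isot {L L' : LLC} (h : Isotopic L L') : ConcStep L L'
  /-- elementary concordance: birth of an unknotted circle (tracked by the
  fresh label `k`), isotopy, then an oriented saddle amalgamating the born
  circle with another component -/
  | birth_saddle {L rest : LLC} (j k : ℕ) (x y : KCode)
      (hk : k ∉ pieceIds L)
      (h : Isotopic ((k, []) :: L) ((j, x) :: (k, y) :: rest)) :
      ConcStep L ((j, x ++ y) :: rest)
  /-- elementary concordance: an oriented saddle splitting off a circle
  (tracked by the fresh label `k`) which after isotopy is an unknotted,
  unlinked circle and dies -/
  | saddle_death {M rest : LLC} (j k : ℕ) (x y : KCode)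
      (hk : k ∉ pieceIds ((j, x ++ y) :: M))
      (h : Isotopic ((j, x) :: (k, y) :: M) ((k, []) :: rest)) :
      ConcStep ((j, x ++ y) :: M) rest

/-- Virtual concordance: genus-zero virtual cobordism. -/
def Concordant : LLC → LLC → Prop := Relation.EqvGen ConcStep

/-- Virtual concordance of knots. -/
def ConcordantK (a b : KCode) : Prop := Concordant [(0, a)] [(0, b)]

/-- The unknot: a circle with no classical crossings. -/
def unknotCode : KCode := []

/-- A virtual knot is (virtually) slice when it is virtually concordant to
the unknot. -/
def SliceK (a : KCode) : Prop := ConcordantK a unknotCode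

/-! ## Seifert circles and faces -/

/-- The position of the other passage of the crossing visited at position `k`. -/
def partnerIdx (a : KCode) (k : ℕ) : ℕ :=
  ((List.range a.length).filter
    (fun j => j != k && (a.getD j default).id == (a.getD k default).id)).headD 0

/-- Traversal of the diagram obtained by the oriented smoothing of every
classical crossing: from the arc entering passage `k+1` one exits along the
arc leaving the partner passage. -/
def seifNext (a : KCode) (k : ℕ) : ℕ := partnerIdx a ((k + 1) % a.length)

/-- A canonical representative of the Seifert circle through arc `k`. -/
def seifRep (a : KCode) (k : ℕ) : ℕ :=
  ((List.range a.length).map (fun t => (seifNext a)^[t] k)).foldr min k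

/-- The number of (virtual) Seifert circles: the number of cycles of the
oriented smoothing of all classical crossings.  A crossingless circle is a
single Seifert circle. -/
def seifertCount (a : KCode) : ℕ :=
  if a.length = 0 then 1 else ((List.range a.length).map (seifRep a)).dedup.length

/-- The counterclockwise-next edge-end around a crossing.  An edge-end is a
pair (position, isIn): the head (`isIn = true`) or the tail (`isIn = false`)
of an arc at the passage at that position. -/
def nextEnd (a : KCode) (e : ℕ × Bool) : ℕ × Bool :=
  let p := a.getD e.1 default
  (partnerIdx a e.1, if p.isOver == (p.sign == 1) then e.2 else !e.2)

/-- The edge-end at which a directed arc (a dart) arrives. -/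
def headEnd (a : KCode) (d : ℕ × Bool) : ℕ × Bool :=
  if d.2 then ((d.1 + 1) % a.length, true) else (d.1, false)

/-- The dart leaving along a given edge-end. -/
def dartFrom (a : KCode) (e : ℕ × Bool) : ℕ × Bool :=
  if e.2 then ((e.1 + a.length - 1) % a.length, false) else (e.1, true)

/-- The face-tracing successor of a dart. -/
def faceNext (a : KCode) (d : ℕ × Bool) : ℕ × Bool :=
  dartFrom a (nextEnd a (headEnd a d))

def encDart (d : ℕ × Bool) : ℕ := 2 * d.1 + (if d.2 then 1 else 0)

/-- A canonical representative of the face through a given dart. -/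
def faceRep (a : KCode) (d : ℕ × Bool) : ℕ :=
  ((List.range (2 * a.length)).map (fun t => encDart ((faceNext a)^[t] d))).foldr
    min (encDart d)

/-- The number of faces of the abstract (ribbon) diagram of a code. -/
def numFaces (a : KCode) : ℕ :=
  (((List.range a.length).flatMap (fun k => [(k, true), (k, false)])).map
    (faceRep a)).dedup.length

/-- A knot code is classical when its underlying abstract diagram is planar,
i.e. (by Euler's formula) when it has `n + 2` faces, `n` being the number of
crossings.  Classical knot diagrams are exactly the virtual knot diagrams
having a realization with no virtual crossings. -/
def IsClassical (a : KCode) : Prop := a = [] ∨ numFaces a = numCross a + 2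

/-! ## Flat diagrams -/

/-- A passage of a flat (no over/under information) virtual knot diagram:
`left = true` when the other strand crosses to the left, so that the affine
label increases by one. -/
structure FlatPassage where
  id : ℕ
  left : Bool
  deriving DecidableEq, Repr

instance : Inhabited FlatPassage := ⟨⟨0, false⟩⟩

/-- The label increment at a flat passage. -/
def FlatPassage.inc (p : FlatPassage) : ℤ := if p.left then 1 else -1

/-- A valid flat knot code: each crossing is traversed exactly twice, once
with increment `+1` and once with increment `-1`. -/
def ValidFlat (a : List FlatPassage) : Prop :=
  ∀ p ∈ a, (a.filter (fun q => q.id == p.id && q.left)).length = 1 ∧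
    (a.filter (fun q => q.id == p.id && !q.left)).length = 1

/-- An affine labeling of a flat knot diagram: `lab k` is the label of the arc
entering the `k`-th passage, and passing a crossing changes the label by the
increment of the passage. -/
def IsFlatLabeling (a : List FlatPassage) (lab : ℕ → ℤ) : Prop :=
  ∀ k, k < a.length → lab ((k + 1) % a.length) = lab k + (a.getD k default).inc

/-!
Planarity gives an Alexander numbering: an integer for every face, increasing by one across each
arc from right to left.  The functions on the faces form a space of dimension `n + 2`.  Such a
function is determined by the value of one face, its jump across one arc, and the changes of its
jump at the `n` over-passages, since the jump changes by opposite amounts at the two passages of a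
crossing.  Hence these `n + 2` parameters can be prescribed at will; prescribing jump `1` and no
change of the jump yields the numbering.  The affine label of an arc is then, up to a constant, the
number of the face to its left, and the two arcs entering a crossing have a face in common.
-/

section PeriodicPoints

open Function

variable {α β : Type*} [LinearOrder β] {f : α → α}

theorem le_foldr_min_iff {l : List β} {b c : β} :
    c ≤ l.foldr min b ↔ c ≤ b ∧ ∀ y ∈ l, c ≤ y := by
  induction l with
  | nil => simp
  | cons y l ih =>
    simp only [List.foldr_cons, le_min_iff, ih, List.forall_mem_cons]
    exact and_left_comm

theorem exists_isPeriodicPt_le_card_of_injOn {s : Finset α} (hmaps : Set.MapsTo f s s)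
    (hinj : Set.InjOn f s) {x : α} (hx : x ∈ s) : ∃ p, 0 < p ∧ p ≤ s.card ∧ IsPeriodicPt f p x := by
  let F : s → s := hmaps.restrict f s s
  have hF : ⟨x, hx⟩ ∈ periodicPts F := (hmaps.restrict_inj.2 hinj).mem_periodicPts ⟨x, hx⟩
  refine ⟨minimalPeriod F ⟨x, hx⟩, minimalPeriod_pos_of_mem_periodicPts hF,
    minimalPeriod_le_card.trans_eq (Fintype.card_coe s), ?_⟩
  exact (isPeriodicPt_minimalPeriod F ⟨x, hx⟩).map fun y => hmaps.val_restrict_apply y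

theorem le_foldr_min_iterate_iff {x : α} {p N : ℕ} (hx : IsPeriodicPt f p x) (hp : 0 < p)
    (hpN : p ≤ N) (g : α → β) {c : β} :
    c ≤ ((List.range N).map fun t => g (f^[t] x)).foldr min (g x) ↔ ∀ t, c ≤ g (f^[t] x) := by
  rw [le_foldr_min_iff, List.forall_mem_map]
  refine ⟨fun ⟨_, h⟩ t => ?_, fun h => ⟨h 0, fun t _ => h t⟩⟩
  rw [← hx.iterate_mod_apply]
  exact h _ (List.mem_range.2 ((Nat.mod_lt t hp).trans_le hpN))

theorem foldr_min_iterate_apply {x : α} {p N : ℕ} (hx : IsPeriodicPt f p x) (hp : 0 < p)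
    (hpN : p ≤ N) (g : α → β) :
    ((List.range N).map fun t => g (f^[t] (f x))).foldr min (g (f x)) =
      ((List.range N).map fun t => g (f^[t] x)).foldr min (g x) := by
  have hfx : IsPeriodicPt f p (f x) := hx.apply_iterate 1
  refine eq_of_forall_le_iff fun c => ?_
  rw [le_foldr_min_iterate_iff hfx hp hpN, le_foldr_min_iterate_iff hx hp hpN]
  refine ⟨fun h t => ?_, fun h t => h (t + 1)⟩
  have hreturn : f^[t + (p - 1)] (f x) = f^[t] x := by
    rw [← iterate_succ_apply, Nat.succ_eq_add_one, add_assoc, Nat.sub_add_cancel hp,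
      iterate_add_apply, hx.eq]
  exact hreturn ▸ h (t + (p - 1))

end PeriodicPoints

theorem existsUnique_getElem_of_length_filter_eq_one {α : Type*} {l : List α} {p : α → Bool}
    (h : (l.filter p).length = 1) : ∃! k, ∃ hk : k < l.length, p l[k] := by
  rw [← List.countP_eq_length_filter, ← List.length_findIdxs (s := 0),
    List.length_eq_one_iff] at h
  obtain ⟨k, hk⟩ := h
  refine ⟨k, ?_, fun j hj => ?_⟩
  · exact List.mem_findIdxs_iff_exists_getElem_pos.1 (hk ▸ List.mem_singleton_self k)
  · exact List.mem_singleton.1 (hk ▸ List.mem_findIdxs_iff_exists_getElem_pos.2 hj)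

/-- The passage at position `k` of a code; the junk value `default` beyond the end. -/
def passageAt (a : KCode) (k : ℕ) : Passage := a.getD k default

section Positions

variable {a : KCode} {j k : ℕ}

theorem passageAt_eq_getElem (hk : k < a.length) : passageAt a k = a[k] :=
  List.getD_eq_getElem _ _ hk

theorem passageAt_mem (hk : k < a.length) : passageAt a k ∈ a :=
  passageAt_eq_getElem hk ▸ List.getElem_mem hk

theorem exists_passageAt_eq {p : Passage} (hp : p ∈ a) : ∃ k < a.length, passageAt a k = p := by
  obtain ⟨k, hk, rfl⟩ := List.mem_iff_getElem.1 hp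
  exact ⟨k, hk, passageAt_eq_getElem hk⟩

theorem exists_passageAt_id_eq {i : ℕ} (hi : i ∈ crossIds a) :
    ∃ k < a.length, (passageAt a k).id = i := by
  obtain ⟨p, hp, rfl⟩ := List.mem_map.1 (List.mem_dedup.1 hi)
  obtain ⟨k, hk, rfl⟩ := exists_passageAt_eq hp
  exact ⟨k, hk, rfl⟩

theorem passageAt_findIdx {p : Passage → Bool} (h : ∃ q ∈ a, p q) :
    a.findIdx p < a.length ∧ p (passageAt a (a.findIdx p)) := by
  have hlt := List.findIdx_lt_length_of_exists h
  exact ⟨hlt, passageAt_eq_getElem hlt ▸ List.findIdx_getElem⟩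

theorem labelAt_succ (hk : k < a.length) :
    labelAt a (k + 1) = labelAt a k + (passageAt a k).inc := by
  rw [passageAt_eq_getElem hk, labelAt, labelAt, List.map_take, List.map_take,
    List.sum_take_succ _ _ (by simpa using hk), List.getElem_map]

namespace ValidK

theorem sign_eq_one_or_neg_one (ha : ValidK a) (hk : k < a.length) :
    (passageAt a k).sign = 1 ∨ (passageAt a k).sign = -1 :=
  (ha _ (passageAt_mem hk)).1

theorem sign_eq_of_id_eq (ha : ValidK a) (hj : j < a.length) (hk : k < a.length)
    (hid : (passageAt a j).id = (passageAt a k).id) :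
    (passageAt a j).sign = (passageAt a k).sign :=
  (ha _ (passageAt_mem hk)).2.2.2 _ (passageAt_mem hj) hid

theorem existsUnique_position (ha : ValidK a) (hk : k < a.length) (b : Bool) :
    ∃! j, j < a.length ∧ (passageAt a j).id = (passageAt a k).id ∧
      (passageAt a j).isOver = b := by
  obtain ⟨-, hover, hunder, -⟩ := ha _ (passageAt_mem hk)
  have hone : (a.filter fun q => q.id == (passageAt a k).id && q.isOver == b).length = 1 := by
    cases b <;> simpa using ‹_›
  refine (existsUnique_congr fun j => ?_).1 (existsUnique_getElem_of_length_filter_eq_one hone)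
  rw [← exists_prop]
  refine exists_congr fun hj => ?_
  rw [passageAt_eq_getElem hj, Bool.and_eq_true, beq_iff_eq, beq_iff_eq]

theorem position_eq (ha : ValidK a) (hj : j < a.length) (hk : k < a.length)
    (hid : (passageAt a j).id = (passageAt a k).id)
    (hover : (passageAt a j).isOver = (passageAt a k).isOver) : j = k :=
  (ha.existsUnique_position hk _).unique ⟨hj, hid, hover⟩ ⟨hk, rfl, rfl⟩

theorem partnerIdx_eq (ha : ValidK a) (hj : j < a.length) (hk : k < a.length)
    (hid : (passageAt a j).id = (passageAt a k).id)
    (hover : (passageAt a j).isOver = !(passageAt a k).isOver) : partnerIdx a k = j := by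
  let candidates := (List.range a.length).filter
    fun j => j != k && (passageAt a j).id == (passageAt a k).id
  have mem_candidates (i : ℕ) : i ∈ candidates ↔
      i < a.length ∧ i ≠ k ∧ (passageAt a i).id = (passageAt a k).id := by
    simp [candidates]
  have hjk : j ≠ k := by
    rintro rfl
    simp at hover
  have hne : candidates ≠ [] := List.ne_nil_of_mem ((mem_candidates j).2 ⟨hj, hjk, hid⟩)
  have hmem : partnerIdx a k ∈ candidates := by
    change candidates.headD 0 ∈ candidates
    rw [List.headD_eq_head?_getD, List.head?_eq_some_head hne]
    exact List.head_mem hne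
  obtain ⟨hlt, hpk, hpid⟩ := (mem_candidates _).1 hmem
  refine ha.position_eq hlt hj (hpid.trans hid.symm) ?_
  rw [hover]
  exact Bool.eq_not_of_ne fun h => hpk (ha.position_eq hlt hk hpid h)

theorem partnerIdx_spec (ha : ValidK a) (hk : k < a.length) :
    partnerIdx a k < a.length ∧ (passageAt a (partnerIdx a k)).id = (passageAt a k).id ∧
      (passageAt a (partnerIdx a k)).isOver = !(passageAt a k).isOver := by
  obtain ⟨j, ⟨hj, hid, hover⟩, -⟩ := ha.existsUnique_position hk !(passageAt a k).isOver
  rw [ha.partnerIdx_eq hj hk hid hover]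
  exact ⟨hj, hid, hover⟩

theorem partnerIdx_lt (ha : ValidK a) (hk : k < a.length) : partnerIdx a k < a.length :=
  (ha.partnerIdx_spec hk).1

theorem partnerIdx_partnerIdx (ha : ValidK a) (hk : k < a.length) :
    partnerIdx a (partnerIdx a k) = k := by
  obtain ⟨hlt, hid, hover⟩ := ha.partnerIdx_spec hk
  exact ha.partnerIdx_eq hk hlt hid.symm (by rw [hover, Bool.not_not])

theorem inc_eq_one_or_neg_one (ha : ValidK a) (hk : k < a.length) :
    (passageAt a k).inc = 1 ∨ (passageAt a k).inc = -1 := by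
  rw [Passage.inc]
  rcases ha.sign_eq_one_or_neg_one hk with h | h <;> cases (passageAt a k).isOver <;> simp [h]

theorem inc_partnerIdx (ha : ValidK a) (hk : k < a.length) :
    (passageAt a (partnerIdx a k)).inc = -(passageAt a k).inc := by
  obtain ⟨hlt, hid, hover⟩ := ha.partnerIdx_spec hk
  rw [Passage.inc, Passage.inc, hover, ha.sign_eq_of_id_eq hlt hk hid]
  cases (passageAt a k).isOver <;> simp

theorem overPos_spec (ha : ValidK a) {i : ℕ} (hi : i ∈ crossIds a) :
    overPos a i < a.length ∧ (passageAt a (overPos a i)).id = i ∧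
      (passageAt a (overPos a i)).isOver = true := by
  obtain ⟨k, hk, rfl⟩ := exists_passageAt_id_eq hi
  obtain ⟨j, ⟨hj, hid, hover⟩, -⟩ := ha.existsUnique_position hk true
  have hfind := passageAt_findIdx (p := fun q => q.id == (passageAt a k).id && q.isOver)
    ⟨_, passageAt_mem hj, by simp [hid, hover]⟩
  simpa only [overPos, Bool.and_eq_true, beq_iff_eq] using hfind

theorem underPos_spec (ha : ValidK a) {i : ℕ} (hi : i ∈ crossIds a) :
    underPos a i < a.length ∧ (passageAt a (underPos a i)).id = i ∧
      (passageAt a (underPos a i)).isOver = false := by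
  obtain ⟨k, hk, rfl⟩ := exists_passageAt_id_eq hi
  obtain ⟨j, ⟨hj, hid, hunder⟩, -⟩ := ha.existsUnique_position hk false
  have hfind := passageAt_findIdx (p := fun q => q.id == (passageAt a k).id && !q.isOver)
    ⟨_, passageAt_mem hj, by simp [hid, hunder]⟩
  simpa only [underPos, Bool.and_eq_true, beq_iff_eq, Bool.not_eq_true'] using hfind

theorem partnerIdx_overPos (ha : ValidK a) {i : ℕ} (hi : i ∈ crossIds a) :
    partnerIdx a (overPos a i) = underPos a i := by
  obtain ⟨ho, hoid, hover⟩ := ha.overPos_spec hi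
  obtain ⟨hu, huid, hunder⟩ := ha.underPos_spec hi
  exact ha.partnerIdx_eq hu ho (huid.trans hoid.symm) (by rw [hover, hunder, Bool.not_true])

theorem sgn_id (ha : ValidK a) (hk : k < a.length) :
    sgn a (passageAt a k).id = (passageAt a k).sign := by
  have hsome : (a.find? fun p => p.id == (passageAt a k).id).isSome :=
    List.find?_isSome.2 ⟨_, passageAt_mem hk, beq_self_eq_true _⟩
  obtain ⟨q, hq⟩ := Option.isSome_iff_exists.1 hsome
  rw [sgn, hq, Option.map_some, Option.getD_some]
  exact (ha _ (passageAt_mem hk)).2.2.2 q (List.mem_of_find?_eq_some hq)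
    (by simpa using List.find?_some hq)

theorem inc_overPos (ha : ValidK a) {i : ℕ} (hi : i ∈ crossIds a) :
    (passageAt a (overPos a i)).inc = -sgn a i := by
  obtain ⟨ho, hoid, hover⟩ := ha.overPos_spec hi
  have hsgn := ha.sgn_id ho
  rw [hoid] at hsgn
  rw [Passage.inc, if_pos hover, hsgn]

end ValidK

end Positions

/-- The arc entering the passage at position `k`, arc `k` being the one that leaves it. -/
def arcInto (a : KCode) (k : ℕ) : ℕ := (k + a.length - 1) % a.length

section Arcs

variable {a : KCode} {k : ℕ}

theorem arcInto_lt (hk : k < a.length) : arcInto a k < a.length :=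
  Nat.mod_lt _ (by lia)

theorem arcInto_succ (hk : k < a.length) : arcInto a (k + 1) = k := by
  rw [arcInto, show k + 1 + a.length - 1 = k + a.length by lia, Nat.add_mod_right,
    Nat.mod_eq_of_lt hk]

theorem arcInto_succ_mod (hk : k < a.length) : arcInto a ((k + 1) % a.length) = k := by
  obtain hlt | heq : k + 1 < a.length ∨ k + 1 = a.length := by lia
  · rw [Nat.mod_eq_of_lt hlt, arcInto_succ hk]
  · rw [heq, Nat.mod_self, arcInto, zero_add, ← heq, Nat.add_sub_cancel,
      Nat.mod_eq_of_lt k.lt_succ_self]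

theorem arcInto_add_one_mod (hk : k < a.length) : (arcInto a k + 1) % a.length = k := by
  rw [arcInto, Nat.mod_add_mod, show k + a.length - 1 + 1 = k + a.length by lia,
    Nat.add_mod_right, Nat.mod_eq_of_lt hk]

theorem apply_eq_apply_zero_of_arcInto {α : Type*} {g : ℕ → α}
    (h : ∀ j < a.length, g (arcInto a j) = g j) (hk : k < a.length) : g k = g 0 := by
  induction k with
  | zero => rfl
  | succ k ih =>
    have hk' : k < a.length := by lia
    rw [← h _ hk, arcInto_succ hk', ih hk']

end Arcs

/-- The directed arcs of a diagram, which also serve as its edge-ends.  The dart `(k, true)` runs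
along the orientation of arc `k` and belongs to the face on its right; `(k, false)` runs against
the orientation and belongs to the face on its left. -/
def darts (a : KCode) : Finset (ℕ × Bool) := Finset.range a.length ×ˢ Finset.univ

section Faces

open Set

variable {a : KCode}

theorem mem_darts {d : ℕ × Bool} : d ∈ darts a ↔ d.1 < a.length := by simp [darts]

theorem card_darts : (darts a).card = 2 * a.length := by simp [darts, mul_comm]

theorem mapsTo_headEnd : MapsTo (headEnd a) (darts a) (darts a) := by
  rintro ⟨k, b⟩ hd
  have hk : k < a.length := mem_darts.1 hd
  refine mem_darts.2 ?_
  cases b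
  · exact hk
  · exact Nat.mod_lt _ (by lia)

theorem mapsTo_dartFrom : MapsTo (dartFrom a) (darts a) (darts a) := by
  rintro ⟨k, b⟩ hd
  have hk : k < a.length := mem_darts.1 hd
  refine mem_darts.2 ?_
  cases b
  · exact hk
  · exact arcInto_lt hk

theorem injOn_headEnd : InjOn (headEnd a) (darts a) := by
  refine LeftInvOn.injOn (f₁' := fun e => if e.2 then (arcInto a e.1, true) else e) ?_
  rintro ⟨k, b⟩ hd
  cases b <;> simp [headEnd, arcInto_succ_mod (mem_darts.1 hd)]

theorem injOn_dartFrom : InjOn (dartFrom a) (darts a) := by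
  refine LeftInvOn.injOn
    (f₁' := fun d => if d.2 then (d.1, false) else ((d.1 + 1) % a.length, true)) ?_
  rintro ⟨k, b⟩ hd
  cases b
  · rfl
  · exact Prod.ext (arcInto_add_one_mod (mem_darts.1 hd)) rfl

namespace ValidK

theorem nextEnd_eq (ha : ValidK a) {k : ℕ} (hk : k < a.length) (b : Bool) :
    nextEnd a (k, b) = (partnerIdx a k, if (passageAt a k).inc = -1 then b else !b) := by
  have hflag : ((passageAt a k).isOver == ((passageAt a k).sign == 1)) = true ↔
      (passageAt a k).inc = -1 := by
    rw [Passage.inc]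
    rcases ha.sign_eq_one_or_neg_one hk with h | h <;> cases (passageAt a k).isOver <;> simp [h]
  exact Prod.ext rfl (if_congr hflag rfl rfl)

theorem mapsTo_nextEnd (ha : ValidK a) : MapsTo (nextEnd a) (darts a) (darts a) :=
  fun _ hd => mem_darts.2 (ha.partnerIdx_lt (mem_darts.1 hd))

theorem injOn_nextEnd (ha : ValidK a) : InjOn (nextEnd a) (darts a) := by
  rintro ⟨j, b⟩ hj ⟨k, c⟩ hk h
  replace hj : j < a.length := mem_darts.1 hj
  replace hk : k < a.length := mem_darts.1 hk
  rw [ha.nextEnd_eq hj, ha.nextEnd_eq hk, Prod.mk.injEq] at h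
  obtain ⟨hpartner, hside⟩ := h
  have hjk : j = k := by
    rw [← ha.partnerIdx_partnerIdx hj, hpartner, ha.partnerIdx_partnerIdx hk]
  subst hjk
  split_ifs at hside
  · exact Prod.ext rfl hside
  · exact Prod.ext rfl (Bool.not_inj hside)

theorem mapsTo_faceNext (ha : ValidK a) : MapsTo (faceNext a) (darts a) (darts a) :=
  mapsTo_dartFrom.comp (ha.mapsTo_nextEnd.comp mapsTo_headEnd)

theorem injOn_faceNext (ha : ValidK a) : InjOn (faceNext a) (darts a) :=
  injOn_dartFrom.comp (ha.injOn_nextEnd.comp injOn_headEnd mapsTo_headEnd)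
    (ha.mapsTo_nextEnd.comp mapsTo_headEnd)

theorem faceRep_faceNext (ha : ValidK a) {d : ℕ × Bool} (hd : d ∈ darts a) :
    faceRep a (faceNext a d) = faceRep a d := by
  obtain ⟨p, hp, hcard, hperiod⟩ :=
    exists_isPeriodicPt_le_card_of_injOn ha.mapsTo_faceNext ha.injOn_faceNext hd
  exact foldr_min_iterate_apply hperiod hp (hcard.trans_eq card_darts) encDart

end ValidK

/-- The faces of the abstract diagram, each given by its canonical representative. -/
def faces (a : KCode) : Finset ℕ := (darts a).image (faceRep a)

theorem card_faces : (faces a).card = numFaces a := by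
  rw [numFaces, ← List.card_toFinset]
  congr 1
  ext x
  simp [faces, mem_darts, and_or_left]

end Faces

/-- A function on darts that descends to the faces. -/
def IsFaceInvariant {α : Type*} (a : KCode) (f : ℕ × Bool → α) : Prop :=
  ∀ d ∈ darts a, f (faceNext a d) = f d

/-- The equalities between the values of a function on the regions around a crossing, seen with
both strands pointing up: the passage at position `r` crosses from left to right, the one at
position `l` from right to left. -/
structure CornersAgree {α : Type*} (a : KCode) (f : ℕ × Bool → α) (r l : ℕ) : Prop where
  bottom : f (arcInto a r, true) = f (arcInto a l, false)
  top : f (r, false) = f (l, true)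
  left : f (arcInto a r, false) = f (l, false)
  right : f (arcInto a l, true) = f (r, true)

/-- The change of a function when an arc is crossed from its right to its left. -/
def arcJump {G : Type*} [Sub G] (f : ℕ × Bool → G) (k : ℕ) : G := f (k, false) - f (k, true)

section Corners

variable {a : KCode} {j : ℕ}

theorem IsFaceInvariant.cornersAgree {α : Type*} {f : ℕ × Bool → α} (hf : IsFaceInvariant a f)
    (ha : ValidK a) (hj : j < a.length) (hinc : (passageAt a j).inc = -1) :
    CornersAgree a f j (partnerIdx a j) := by
  have hlt := ha.partnerIdx_lt hj
  have hinc' : (passageAt a (partnerIdx a j)).inc = 1 := by rw [ha.inc_partnerIdx hj, hinc]; rfl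
  have turn_right (b : Bool) : nextEnd a (j, b) = (partnerIdx a j, b) := by
    rw [ha.nextEnd_eq hj, if_pos hinc]
  have turn_left (b : Bool) : nextEnd a (partnerIdx a j, b) = (j, !b) := by
    rw [ha.nextEnd_eq hlt, hinc', ha.partnerIdx_partnerIdx hj]; rfl
  have headEnd_into {k : ℕ} (hk : k < a.length) : headEnd a (arcInto a k, true) = (k, true) :=
    Prod.ext (arcInto_add_one_mod hk) rfl
  have hbottom := hf (arcInto a j, true) (mem_darts.2 (arcInto_lt hj))
  have hright := hf (arcInto a (partnerIdx a j), true) (mem_darts.2 (arcInto_lt hlt))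
  have htop := hf (j, false) (mem_darts.2 hj)
  have hleft := hf (partnerIdx a j, false) (mem_darts.2 hlt)
  rw [faceNext, headEnd_into hj, turn_right] at hbottom
  rw [faceNext, headEnd_into hlt, turn_left] at hright
  rw [faceNext, show headEnd a (j, false) = (j, false) from rfl, turn_right] at htop
  rw [faceNext, show headEnd a (partnerIdx a j, false) = (partnerIdx a j, false) from rfl,
    turn_left] at hleft
  exact ⟨hbottom.symm, htop.symm, hleft, hright.symm⟩

theorem IsFaceInvariant.cornersAgree_or {α : Type*} {f : ℕ × Bool → α}
    (hf : IsFaceInvariant a f) (ha : ValidK a) (hj : j < a.length) :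
    (passageAt a j).inc = -1 ∧ CornersAgree a f j (partnerIdx a j) ∨
      (passageAt a j).inc = 1 ∧ CornersAgree a f (partnerIdx a j) j := by
  rcases ha.inc_eq_one_or_neg_one hj with hinc | hinc
  · have hcorners := hf.cornersAgree ha (ha.partnerIdx_lt hj) (by rw [ha.inc_partnerIdx hj, hinc])
    rw [ha.partnerIdx_partnerIdx hj] at hcorners
    exact .inr ⟨hinc, hcorners⟩
  · exact .inl ⟨hinc, hf.cornersAgree ha hj hinc⟩

variable {G : Type*} [AddCommGroup G] {f : ℕ × Bool → G}

theorem CornersAgree.arcJump_sub_arcJump {r l : ℕ} (h : CornersAgree a f r l) :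
    arcJump f (arcInto a r) - arcJump f r = -(arcJump f (arcInto a l) - arcJump f l) := by
  simp only [arcJump, h.bottom, h.top, h.left, h.right]
  abel

namespace IsFaceInvariant

theorem arcJump_sub_arcJump_partnerIdx (hf : IsFaceInvariant a f) (ha : ValidK a)
    (hj : j < a.length) :
    arcJump f (arcInto a j) - arcJump f j =
      -(arcJump f (arcInto a (partnerIdx a j)) - arcJump f (partnerIdx a j)) := by
  rcases hf.cornersAgree_or ha hj with ⟨-, h⟩ | ⟨-, h⟩
  · exact h.arcJump_sub_arcJump
  · rw [h.arcJump_sub_arcJump, neg_neg]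

theorem arcJump_eq_arcJump_zero (hf : IsFaceInvariant a f) (ha : ValidK a)
    (hover : ∀ k < a.length, (passageAt a k).isOver = true →
      arcJump f (arcInto a k) - arcJump f k = 0) (hj : j < a.length) :
    arcJump f j = arcJump f 0 := by
  refine apply_eq_apply_zero_of_arcInto (fun k hk => sub_eq_zero.1 ?_) hj
  cases ho : (passageAt a k).isOver
  · obtain ⟨hlt, -, hpartner⟩ := ha.partnerIdx_spec hk
    rw [hf.arcJump_sub_arcJump_partnerIdx ha hk, hover _ hlt (by rw [hpartner, ho]; rfl),
      neg_zero]
  · exact hover k hk ho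

theorem apply_eq_apply_zero (hf : IsFaceInvariant a f) (ha : ValidK a)
    (hjump : ∀ k < a.length, arcJump f k = 0) {d : ℕ × Bool} (hd : d ∈ darts a) :
    f d = f (0, true) := by
  have hsides {k : ℕ} (hk : k < a.length) : f (k, false) = f (k, true) :=
    sub_eq_zero.1 (hjump k hk)
  have hinto (k : ℕ) (hk : k < a.length) : f (arcInto a k, true) = f (k, true) := by
    have hlt := ha.partnerIdx_lt hk
    rcases hf.cornersAgree_or ha hk with ⟨-, h⟩ | ⟨-, h⟩
    · rw [← hsides (arcInto_lt hk), h.left, hsides hlt, ← h.top, hsides hk]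
    · rw [h.right, ← hsides hlt, h.top]
  have hright {k : ℕ} (hk : k < a.length) : f (k, true) = f (0, true) :=
    apply_eq_apply_zero_of_arcInto (g := fun k => f (k, true)) hinto hk
  obtain ⟨k, b⟩ := d
  have hk : k < a.length := mem_darts.1 hd
  cases b
  · rw [hsides hk, hright hk]
  · exact hright hk

end IsFaceInvariant

end Corners

/-- An Alexander numbering of the faces, here a function on darts: the number on the left of every
arc exceeds the one on its right by `1`. -/
structure IsAlexanderNumbering {R : Type*} [Ring R] (a : KCode) (f : ℕ × Bool → R) : Prop where
  isFaceInvariant : IsFaceInvariant a f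
  arcJump_eq_one : ∀ k < a.length, arcJump f k = 1

namespace IsAlexanderNumbering

variable {R : Type*} [Ring R] {a : KCode} {f : ℕ × Bool → R} {k : ℕ}

theorem left_eq (hf : IsAlexanderNumbering a f) (hk : k < a.length) :
    f (k, false) = f (k, true) + 1 := by
  rw [← hf.arcJump_eq_one k hk, arcJump, add_sub_cancel]

theorem left_eq_left_arcInto_add_inc (hf : IsAlexanderNumbering a f) (ha : ValidK a)
    (hk : k < a.length) :
    f (k, false) = f (arcInto a k, false) + (passageAt a k).inc := by
  rcases hf.isFaceInvariant.cornersAgree_or ha hk with ⟨hinc, h⟩ | ⟨hinc, h⟩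
  · rw [hinc, h.left, hf.left_eq (ha.partnerIdx_lt hk), h.top]
    simp
  · rw [hinc, ← h.left, hf.left_eq (arcInto_lt (ha.partnerIdx_lt hk)), h.bottom]
    simp

theorem left_arcInto_sub_left_arcInto_partnerIdx (hf : IsAlexanderNumbering a f) (ha : ValidK a)
    (hk : k < a.length) :
    f (arcInto a k, false) - f (arcInto a (partnerIdx a k), false) = -(passageAt a k).inc := by
  rcases hf.isFaceInvariant.cornersAgree_or ha hk with ⟨hinc, h⟩ | ⟨hinc, h⟩
  · rw [hinc, ← h.bottom, hf.left_eq (arcInto_lt hk)]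
    simp
  · rw [hinc, ← h.bottom, hf.left_eq (arcInto_lt (ha.partnerIdx_lt hk))]
    simp

theorem labelAt_eq (hf : IsAlexanderNumbering a f) (ha : ValidK a) (hk : k < a.length) :
    (labelAt a k : R) = f (arcInto a k, false) - f (arcInto a 0, false) := by
  induction k with
  | zero => simp [labelAt]
  | succ k ih =>
    have hk' : k < a.length := by lia
    rw [labelAt_succ hk', arcInto_succ hk', hf.left_eq_left_arcInto_add_inc ha hk', Int.cast_add,
      ih hk', sub_add_eq_add_sub]

theorem labelAt_sub_labelAt_partnerIdx [CharZero R] (hf : IsAlexanderNumbering a f)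
    (ha : ValidK a) (hk : k < a.length) :
    labelAt a k - labelAt a (partnerIdx a k) = -(passageAt a k).inc := by
  refine Int.cast_injective (α := R) ?_
  rw [Int.cast_sub, hf.labelAt_eq ha hk, hf.labelAt_eq ha (ha.partnerIdx_lt hk),
    sub_sub_sub_cancel_right, hf.left_arcInto_sub_left_arcInto_partnerIdx ha hk, Int.cast_neg]

theorem wt_eq_zero [CharZero R] (hf : IsAlexanderNumbering a f) (ha : ValidK a) {i : ℕ}
    (hi : i ∈ crossIds a) : wt a i = 0 := by
  rw [wt, ← ha.partnerIdx_overPos hi, hf.labelAt_sub_labelAt_partnerIdx ha (ha.overPos_spec hi).1,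
    ha.inc_overPos hi, neg_neg, sub_self]

end IsAlexanderNumbering

/-- The positions of the over-passages, which stand for the crossings. -/
def overPositions (a : KCode) : Finset ℕ :=
  {k ∈ Finset.range a.length | (passageAt a k).isOver = true}

theorem mem_overPositions {a : KCode} {k : ℕ} :
    k ∈ overPositions a ↔ k < a.length ∧ (passageAt a k).isOver = true := by
  simp [overPositions]

theorem ValidK.card_overPositions_le {a : KCode} (ha : ValidK a) :
    (overPositions a).card ≤ numCross a := by
  rw [numCross, crossIds, ← List.card_toFinset]
  refine Finset.card_le_card_of_injOn (fun k => (passageAt a k).id) (fun k hk => ?_)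
    fun j hj k hk hid => ?_
  · exact List.mem_toFinset.2 (List.mem_map_of_mem (passageAt_mem (mem_overPositions.1 hk).1))
  · obtain ⟨hj, hjover⟩ := mem_overPositions.1 hj
    obtain ⟨hk, hkover⟩ := mem_overPositions.1 hk
    exact ha.position_eq hj hk hid (hjover.trans hkover.symm)

section Existence

variable (K : Type*) [Field K] (a : KCode)

/-- The function on darts induced by a function on the faces, with junk value `0` away from the
darts of the diagram. -/
noncomputable def faceFunction : (faces a → K) →ₗ[K] (ℕ × Bool → K) :=
  LinearMap.funLeft K K (faceRep a) ∘ₗ Function.ExtendByZero.linearMap K Subtype.val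

/-- The parameters that determine a function on the faces: the changes of its jump at the
over-passages, its jump across arc `0`, and its value on the right of arc `0`. -/
noncomputable def faceParameters : (faces a → K) →ₗ[K] (overPositions a → K) × K × K :=
  let value (d : ℕ × Bool) : (ℕ × Bool → K) →ₗ[K] K := LinearMap.proj d
  let jump (k : ℕ) := value (k, false) - value (k, true)
  ((LinearMap.pi fun k : overPositions a => jump (arcInto a k) - jump k).prod
    ((jump 0).prod (value (0, true)))) ∘ₗ faceFunction K a

variable {K a}

theorem faceFunction_apply {g : faces a → K} {d : ℕ × Bool} (x : faces a)
    (hx : faceRep a d = x) : faceFunction K a g d = g x := by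
  change Function.extend Subtype.val g 0 (faceRep a d) = g x
  rw [hx, Subtype.val_injective.extend_apply]

theorem isFaceInvariant_faceFunction (ha : ValidK a) (g : faces a → K) :
    IsFaceInvariant a (faceFunction K a g) := fun d hd => by
  let x : faces a := ⟨faceRep a d, Finset.mem_image_of_mem _ hd⟩
  rw [faceFunction_apply x rfl, faceFunction_apply x (ha.faceRep_faceNext hd)]

theorem arcJump_faceFunction_eq (ha : ValidK a) {g : faces a → K}
    (hg : (faceParameters K a g).1 = 0) {k : ℕ} (hk : k < a.length) :
    arcJump (faceFunction K a g) k = (faceParameters K a g).2.1 :=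
  (isFaceInvariant_faceFunction ha g).arcJump_eq_arcJump_zero ha
    (fun j hj hover => congrFun hg ⟨j, mem_overPositions.2 ⟨hj, hover⟩⟩) hk

theorem faceParameters_injective (ha : ValidK a) :
    Function.Injective (faceParameters K a) := by
  refine (injective_iff_map_eq_zero _).2 fun g hg => funext fun x => ?_
  obtain ⟨d, hd, hdx⟩ := Finset.mem_image.1 x.2
  have hjump (k : ℕ) (hk : k < a.length) : arcJump (faceFunction K a g) k = 0 := by
    rw [arcJump_faceFunction_eq ha (by rw [hg]; rfl) hk, hg]
    rfl
  calc g x = faceFunction K a g d := (faceFunction_apply x hdx).symm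
    _ = faceFunction K a g (0, true) :=
      (isFaceInvariant_faceFunction ha g).apply_eq_apply_zero ha hjump hd
    _ = 0 := congrArg (·.2.2) hg

theorem faceParameters_surjective (ha : ValidK a) (hfaces : numCross a + 2 ≤ numFaces a) :
    Function.Surjective (faceParameters K a) := by
  have hinj := faceParameters_injective (K := K) ha
  have hdim_faces : Module.finrank K (faces a → K) = numFaces a := by
    rw [Module.finrank_fintype_fun_eq_card, Fintype.card_coe, card_faces]
  have hdim_params :
      Module.finrank K ((overPositions a → K) × K × K) = (overPositions a).card + 2 := by
    simp
  have hle := LinearMap.finrank_le_finrank_of_injective hinj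
  have hcard := ha.card_overPositions_le
  exact (LinearMap.injective_iff_surjective_of_finrank_eq_finrank (by lia)).1 hinj

theorem exists_isAlexanderNumbering (ha : ValidK a) (hfaces : numCross a + 2 ≤ numFaces a) :
    ∃ f : ℕ × Bool → K, IsAlexanderNumbering a f := by
  obtain ⟨g, hg⟩ := faceParameters_surjective (K := K) ha hfaces (0, 1, 0)
  refine ⟨faceFunction K a g, isFaceInvariant_faceFunction ha g, fun k hk => ?_⟩
  rw [arcJump_faceFunction_eq ha (by rw [hg]) hk, hg]

end Existence

theorem affP_eq_zero_of_wt_eq_zero {a : KCode} (h : ∀ i ∈ crossIds a, wt a i = 0) :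
    affP a = 0 := by
  refine List.sum_eq_zero (List.forall_mem_map.2 fun i hi => ?_)
  rw [h i hi, T_zero, sub_self, mul_zero]

/-- If `K` is a classical knot diagram (a virtual knot
diagram with no virtual crossings, i.e. with planar Gauss code), then every
classical crossing `c` of `K` has weight `W(c) = 0`, and consequently
`P_K(t) = 0`. -/
theorem classical_weights_zero (a : KCode) (ha : ValidK a) (hcl : IsClassical a) :
    (∀ i ∈ crossIds a, wt a i = 0) ∧ affP a = 0 := by
  have hwt : ∀ i ∈ crossIds a, wt a i = 0 := by
    rcases hcl with rfl | hfaces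
    · simp [crossIds]
    · obtain ⟨f, hf⟩ := exists_isAlexanderNumbering (K := ℚ) ha hfaces.ge
      exact fun i hi => hf.wt_eq_zero ha hi
  exact ⟨hwt, affP_eq_zero_of_wt_eq_zero hwt⟩
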